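/- (Exact feasibility utilization bound.) Consider n sporadic implicit-deadline tasks on m identical processors; task i has an integer period T_i ≥ 1, a worst-case execution time C_i > 0, utilization u_i = C_i/T_i with u_i ≤ γ_i(m), where γ_i is a work-limited parallelism profile on m processors. For task i let k_i = 0 if u_i ≤ γ_i(1) and otherwise k_i = max{1 ≤ j ≤ m : γ_i(j) < u_i}, and let λ_i = k_i + (u_i − γ_i(k_i))/(γ_i(k_i+1) − γ_i(k_i)). Then the following are equivalent: (a) there exists a 1-periodic measurable schedule σ : ℝ → (Fin m → Option (Fin n)) such that for every task i and every real t, the integral over [t, t + T_i) of s ↦ γ_i(c_i(s)) is at least C_i, where c_i(s) is the number of processors assigned to i at time s; (b) λ_1 + λ_2 + ⋯ + λ_n ≤ m. -/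

import Mathlib

open MeasureTheory

/-- Discrete measurable-space structure on `Option α`. -/
instance optionMeasurableSpace {α : Type*} [MeasurableSpace α] :
    MeasurableSpace (Option α) := ⊤


theorem aux_meas {n m : ℕ} (σ : ℝ → Fin m → Option (Fin n)) (hσ : Measurable σ) (i : Fin n) :
    Measurable (fun s => (Finset.univ.filter (fun p => σ s p = some i)).card) := by
  have : (fun s => (Finset.univ.filter (fun p => σ s p = some i)).card)
      = fun s => ∑ p : Fin m, if σ s p = some i then 1 else 0 := by
    funext s
    rw [Finset.card_filter]
  rw [this]
  refine Finset.measurable_sum _ (fun p _ => ?_)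
  refine Measurable.ite ?_ measurable_const measurable_const
  have h1 : Measurable (fun s => σ s p) := (measurable_pi_apply p).comp hσ
  exact h1 (t := {some i}) trivial

theorem aux_int (c : ℝ → ℕ) (m : ℕ) (hc : Measurable c) (hm : ∀ s, c s ≤ m) (g : ℕ → ℝ)
    (a b : ℝ) : IntervalIntegrable (fun s => g (c s)) volume a b := by
  rw [intervalIntegrable_iff]
  refine Measure.integrableOn_of_bounded (M := ∑ j ∈ Finset.range (m+1), |g j|) ?_ ?_ ?_
  · simp
  · exact ((measurable_from_top (f := g)).comp hc).aestronglyMeasurable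
  · refine Filter.Eventually.of_forall (fun s => ?_)
    rw [Real.norm_eq_abs]
    exact Finset.single_le_sum (f := fun j => |g j|) (fun j _ => abs_nonneg _)
      (Finset.mem_range.2 (Nat.lt_succ_of_le (hm s)))

theorem aux_per (f : ℝ → ℝ) (hf : ∀ s, f (s+1) = f s)
    (hi : ∀ a b, IntervalIntegrable f volume a b)
    (t : ℝ) (T : ℕ) :
    ∫ s in Set.Ico t (t + (T : ℝ)), f s = T * ∫ s in (0:ℝ)..1, f s := by
  have hp : Function.Periodic f 1 := hf
  rw [integral_Ico_eq_integral_Ioc, ← intervalIntegral.integral_of_le (by simp)]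
  have := hp.intervalIntegral_add_zsmul_eq (T : ℤ) t hi
  simp only [zsmul_eq_mul, Int.cast_natCast, mul_one] at this
  rw [this]
  have h2 := hp.intervalIntegral_add_eq t 0
  rw [h2, zero_add]

/-- concavity: increments antitone -/
theorem aux_line (m : ℕ) (g : ℕ → ℝ)
    (hd : ∀ j j', j ≤ j' → j' < m → g (j'+1) - g j' ≤ g (j+1) - g j)
    (k : ℕ) (hk : k < m) (c : ℕ) (hc : c ≤ m) :
    g c ≤ g k + (g (k+1) - g k) * ((c:ℝ) - k) := by
  rcases le_total k c with h | h
  · induction c, h using Nat.le_induction with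
    | base => simp
    | succ c h ih =>
      have := ih (by omega)
      have h2 := hd k c h (by omega)
      push_cast
      nlinarith
  · obtain ⟨e, rfl⟩ := Nat.exists_eq_add_of_le h
    clear hc h
    have key : ∀ e' , e' ≤ e → g (c + e - e') ≤ g (c+e) - (g (c+e+1) - g (c+e)) * (e':ℝ) := by
      intro e' he'
      induction e' with
      | zero => simp
      | succ e' ih =>
        have := ih (by omega)
        have h2 := hd (c + e - (e'+1)) (c+e) (by omega) hk
        rw [show c + e - (e'+1) + 1 = c + e - e' by omega] at h2
        push_cast
        nlinarith
    have := key e le_rfl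
    rw [Nat.add_sub_cancel] at this
    push_cast
    nlinarith

theorem aux_card (m : ℕ) (a b x : ℝ) (k : ℕ) (ha : 0 ≤ a) (hb : b ≤ m) (hx0 : 0 ≤ x) (hx1 : x < 1)
    (h1 : k ≤ b - a) (h2 : b - a ≤ k + 1) :
    (Finset.univ.filter (fun p : Fin m => a ≤ p + x ∧ p + x < b)).card = k ∨
    (Finset.univ.filter (fun p : Fin m => a ≤ p + x ∧ p + x < b)).card = k + 1 := by
  have hab : a ≤ b := by have : (0:ℝ) ≤ k := Nat.cast_nonneg k
                         linarith
  have hcard : (Finset.univ.filter (fun p : Fin m => a ≤ p + x ∧ p + x < b)).card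
      = ⌈b - x⌉₊ - ⌈a - x⌉₊ := by
    rw [← Nat.card_Ico, ← Finset.card_map Fin.valEmbedding]
    congr 1
    ext q
    simp only [Finset.mem_map, Finset.mem_filter, Finset.mem_univ, true_and, Fin.valEmbedding_apply,
      Finset.mem_Ico, Nat.ceil_le, Nat.lt_ceil]
    constructor
    · rintro ⟨p, ⟨h, h'⟩, rfl⟩
      constructor <;> linarith
    · rintro ⟨h, h'⟩
      have : (q:ℝ) < m := by linarith
      refine ⟨⟨q, by exact_mod_cast this⟩, ⟨?_, ?_⟩, rfl⟩ <;> simp only <;> linarith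
  rw [hcard]
  have e1 : ⌈a - x⌉₊ ≤ ⌈b - x⌉₊ := Nat.ceil_mono (by linarith)
  have e2 := Nat.le_ceil (a - x)
  have e3 := Nat.le_ceil (b - x)
  have e4 : (⌈a - x⌉₊ : ℝ) < a - x + 1 := Nat.ceil_lt_add_one_of_gt_neg_one (by linarith)
  have e5 : (⌈b - x⌉₊ : ℝ) < b - x + 1 := Nat.ceil_lt_add_one_of_gt_neg_one (by linarith)
  have f1 : (⌈b - x⌉₊ : ℝ) < ⌈a - x⌉₊ + k + 2 := by linarith
  have f2 : (⌈a - x⌉₊ : ℝ) + k < ⌈b - x⌉₊ + 1 := by linarith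
  have f1' : ⌈b - x⌉₊ < ⌈a - x⌉₊ + k + 2 := by exact_mod_cast f1
  have f2' : ⌈a - x⌉₊ + k < ⌈b - x⌉₊ + 1 := by exact_mod_cast f2
  omega

theorem aux_intcard (m : ℕ) (a b : ℝ) (ha : 0 ≤ a) (hab : a ≤ b) (hb : b ≤ m) :
    ∫ x in (0:ℝ)..1, ((Finset.univ.filter (fun p : Fin m => a ≤ p + x ∧ p + x < b)).card : ℝ)
     = b - a := by
  set f : ℝ → ℝ := Set.indicator (Set.Ico a b) 1 with hf
  have hfi : ∀ u v, IntervalIntegrable f volume u v := by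
    intro u v
    rw [intervalIntegrable_iff]
    exact Integrable.indicator (f := fun _ => (1:ℝ)) (integrableOn_const (by simp)) measurableSet_Ico
  have e : ∀ x : ℝ, ((Finset.univ.filter (fun p : Fin m => a ≤ p + x ∧ p + x < b)).card : ℝ)
      = ∑ p ∈ Finset.range m, f (p + x) := by
    intro x
    rw [Finset.card_filter, Finset.sum_range]
    push_cast
    refine Finset.sum_congr rfl (fun p _ => ?_)
    simp [hf, Set.indicator_apply]
  simp_rw [e]
  rw [intervalIntegral.integral_finsetSum]
  · simp_rw [intervalIntegral.integral_comp_add_left]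
    have := intervalIntegral.sum_integral_adjacent_intervals (f := f) (μ := volume) (a := fun k : ℕ => (k:ℝ)) (n := m) (fun k _ => hfi _ _)
    simp only [Nat.cast_add, Nat.cast_one, Nat.cast_zero] at this
    simp only [add_zero]
    rw [this, intervalIntegral.integral_of_le (by simp), ← integral_Ico_eq_integral_Ioc, hf,
      setIntegral_indicator measurableSet_Ico, Set.inter_eq_right.2 (Set.Ico_subset_Ico ha hb)]
    simp [hab]
  · intro p _
    have := (hfi (p + 0) (p + 1)).comp_add_left (p:ℝ)
    simpa using this

/-- Exact feasibility utilization bound: for sporadic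
implicit-deadline tasks with work-limited parallelism profiles, a 1-periodic
measurable schedule giving each task `i` at least `Cᵢ` units of execution in
every window `[t, t + Tᵢ)` exists if and only if `∑ λᵢ ≤ m`. -/
theorem stmt7 (n m : ℕ) (hn : 1 ≤ n) (hm : 1 ≤ m)
    (γ : Fin n → ℕ → ℝ)
    (h0 : ∀ i, γ i 0 = 0)
    (hmono : ∀ i, ∀ j : ℕ, j < m → γ i j < γ i (j + 1))
    (hratio : ∀ i, ∀ j j' : ℕ, 1 ≤ j → j < j' → j' ≤ m →
      γ i j' / γ i j < (j' : ℝ) / (j : ℝ))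
    (hconv : ∀ i, ∀ j j' : ℕ, 1 ≤ j → j < j' → j' < m →
      γ i (j' + 1) - γ i j' ≤ γ i (j + 1) - γ i j)
    (T : Fin n → ℕ) (hT : ∀ i, 1 ≤ T i)
    (C : Fin n → ℝ) (hC : ∀ i, 0 < C i)
    (u : Fin n → ℝ) (hu : ∀ i, u i = C i / (T i : ℝ))
    (hum : ∀ i, u i ≤ γ i m)
    (k : Fin n → ℕ)
    (hk : ∀ i, k i = if u i ≤ γ i 1 then 0
      else Nat.findGreatest (fun j => γ i j < u i) m)
    (lam : Fin n → ℝ)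
    (hlam : ∀ i, lam i =
      (k i : ℝ) + (u i - γ i (k i)) / (γ i (k i + 1) - γ i (k i))) :
    (∃ σ : ℝ → Fin m → Option (Fin n),
      Measurable σ ∧
      (∀ s : ℝ, σ (s + 1) = σ s) ∧
      (∀ i, ∀ t : ℝ, C i ≤ ∫ s in Set.Ico t (t + (T i : ℝ)),
        γ i ((Finset.univ.filter (fun p => σ s p = some i)).card)))
    ↔ ∑ i, lam i ≤ (m : ℝ) := by
  have hinc : ∀ i, ∀ j j' : ℕ, j ≤ j' → j' < m → γ i (j'+1) - γ i j' ≤ γ i (j+1) - γ i j := by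
    intro i
    have h01 : 1 < m → γ i 2 - γ i 1 ≤ γ i 1 - γ i 0 := by
      intro h
      have h1 := hmono i 0 (by omega)
      rw [h0, zero_add] at h1
      have := hratio i 1 2 le_rfl (by omega) (by omega)
      rw [div_lt_iff₀ h1] at this
      norm_num at this
      rw [h0]; linarith
    intro j j' hjj hj'
    rcases hjj.eq_or_lt with rfl | hlt
    · exact le_rfl
    rcases Nat.eq_zero_or_pos j with rfl | hj
    · rcases (show 1 ≤ j' from hlt).eq_or_lt with rfl | h
      · exact h01 hj'
      · exact (hconv i 1 j' le_rfl h hj').trans (h01 (by omega))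
    · exact hconv i j j' hj hlt hj'
  have hTpos : ∀ i, (0:ℝ) < T i := fun i => by exact_mod_cast hT i
  have hupos : ∀ i, 0 < u i := fun i => by rw [hu]; exact div_pos (hC i) (hTpos i)
  have hCu : ∀ i, C i = T i * u i := fun i => by
    rw [hu]; field_simp [(hTpos i).ne']
  have hkm : ∀ i, k i < m ∧ γ i (k i) ≤ u i ∧ u i ≤ γ i (k i + 1) := by
    intro i
    rw [hk]
    split_ifs with h
    · exact ⟨by omega, by rw [h0]; exact (hupos i).le, by simpa using h⟩
    · push Not at h
      have hP : γ i (Nat.findGreatest (fun j => γ i j < u i) m) < u i :=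
        Nat.findGreatest_spec (P := fun j => γ i j < u i) hm h
      have hle := Nat.findGreatest_le (P := fun j => γ i j < u i) m
      have hlt : Nat.findGreatest (fun j => γ i j < u i) m < m := by
        refine lt_of_le_of_ne hle (fun he => ?_)
        rw [he] at hP
        exact absurd (hum i) (not_le.2 hP)
      refine ⟨hlt, hP.le, ?_⟩
      have := Nat.findGreatest_is_greatest (P := fun j => γ i j < u i) (Nat.lt_succ_self _) hlt
      exact not_lt.1 this
  have hdpos : ∀ i, 0 < γ i (k i + 1) - γ i (k i) := fun i => sub_pos.2 (hmono i _ (hkm i).1)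
  have hlamu : ∀ i, u i = γ i (k i) + (γ i (k i + 1) - γ i (k i)) * (lam i - k i) := by
    intro i
    rw [hlam]
    have := (hdpos i).ne'
    field_simp
    ring
  have hlam1 : ∀ i, (k i : ℝ) ≤ lam i := by
    intro i
    rw [hlam]
    have := div_nonneg (sub_nonneg.2 (hkm i).2.1) (hdpos i).le
    linarith
  have hlam2 : ∀ i, lam i ≤ k i + 1 := by
    intro i
    rw [hlam]
    have : (u i - γ i (k i)) / (γ i (k i + 1) - γ i (k i)) ≤ 1 := by
      rw [div_le_one (hdpos i)]
      linarith [(hkm i).2.2]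
    linarith
  have hlam0 : ∀ i, 0 ≤ lam i := fun i => (Nat.cast_nonneg _).trans (hlam1 i)
  have hcm : ∀ (σ : ℝ → Fin m → Option (Fin n)) i s,
      (Finset.univ.filter (fun p => σ s p = some i)).card ≤ m := by
    intro σ i s
    simpa using Finset.card_le_univ (Finset.univ.filter (fun p => σ s p = some i))
  constructor
  · rintro ⟨σ, hσ, hper, hwork⟩
    have hint : ∀ i, ∀ g : ℕ → ℝ, IntervalIntegrable
        (fun s => g (Finset.univ.filter (fun p => σ s p = some i)).card) volume 0 1 :=
      fun i g => aux_int _ m (aux_meas σ hσ i) (hcm σ i) g 0 1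
    have h1 : ∀ i, lam i ≤ ∫ s in (0:ℝ)..1,
        ((Finset.univ.filter (fun p => σ s p = some i)).card : ℝ) := by
      intro i
      have hw := hwork i 0
      rw [aux_per (fun s => γ i (Finset.univ.filter (fun p => σ s p = some i)).card)
        (fun s => by simp only [hper])
        (fun a b => aux_int _ m (aux_meas σ hσ i) (hcm σ i) (γ i) a b), hCu] at hw
      have hw' := le_of_mul_le_mul_left hw (hTpos i)
      have hle : ∫ s in (0:ℝ)..1, γ i (Finset.univ.filter (fun p => σ s p = some i)).card ≤
          ∫ s in (0:ℝ)..1, (γ i (k i) + (γ i (k i + 1) - γ i (k i)) *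
            (((Finset.univ.filter (fun p => σ s p = some i)).card : ℝ) - k i)) := by
        refine intervalIntegral.integral_mono_on zero_le_one (hint i _)
          (hint i (fun c => γ i (k i) + (γ i (k i + 1) - γ i (k i)) * ((c:ℝ) - k i))) ?_
        intro s _
        exact aux_line m (γ i) (hinc i) (k i) (hkm i).1 _ (hcm σ i s)
      rw [intervalIntegral.integral_add (by simp)
        (hint i (fun c => (γ i (k i + 1) - γ i (k i)) * ((c:ℝ) - k i))),
        intervalIntegral.integral_const_mul,
        intervalIntegral.integral_sub (hint i (fun c => (c:ℝ))) (by simp)] at hle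
      simp only [intervalIntegral.integral_const, sub_zero, one_smul] at hle
      have h3 := hw'.trans hle
      rw [hlamu i] at h3
      have h4 := le_of_mul_le_mul_left (le_of_add_le_add_left h3) (hdpos i)
      linarith
    calc ∑ i, lam i ≤ ∑ i, ∫ s in (0:ℝ)..1,
        ((Finset.univ.filter (fun p => σ s p = some i)).card : ℝ) := Finset.sum_le_sum (fun i _ => h1 i)
      _ = ∫ s in (0:ℝ)..1, ∑ i, ((Finset.univ.filter (fun p => σ s p = some i)).card : ℝ) := by
        rw [intervalIntegral.integral_finsetSum]
        exact fun i _ => hint i (fun c => (c:ℝ))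
      _ ≤ ∫ s in (0:ℝ)..1, (m:ℝ) := by
        refine intervalIntegral.integral_mono_on zero_le_one ?_ (by simp) ?_
        · have := IntervalIntegrable.sum Finset.univ (fun i _ => hint i (fun c => (c:ℝ)))
          rwa [show (∑ i, fun s => ((Finset.univ.filter (fun p => σ s p = some i)).card : ℝ)) =
            fun s => ∑ i, ((Finset.univ.filter (fun p => σ s p = some i)).card : ℝ) by
              funext s; simp] at this
        · intro s _
          have : ∑ i, (Finset.univ.filter (fun p => σ s p = some i)).card ≤ m := by
            rw [← Finset.card_biUnion]
            · exact (Finset.card_le_univ _).trans (by simp)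
            · intro i _ j _ hij
              refine Finset.disjoint_filter.2 (fun p _ h h' => hij ?_)
              rw [h] at h'
              exact Option.some.inj h'
          exact_mod_cast this
      _ = m := by simp
  · intro hsum
    classical
    set S : Fin n → ℝ := fun i => ∑ j ∈ Finset.Iio i, lam j with hS
    have hS0 : ∀ i, 0 ≤ S i := fun i => Finset.sum_nonneg (fun j _ => hlam0 j)
    have hSlt : ∀ i j, i < j → S i + lam i ≤ S j := by
      intro i j hij
      rw [hS]
      simp only
      rw [add_comm, ← Finset.sum_insert (by simp)]
      refine Finset.sum_le_sum_of_subset_of_nonneg ?_ (fun j _ _ => hlam0 j)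
      intro x hx
      simp only [Finset.mem_insert, Finset.mem_Iio] at hx ⊢
      rcases hx with rfl | hx
      · exact hij
      · exact hx.trans hij
    have hSm : ∀ i, S i + lam i ≤ m := by
      intro i
      refine le_trans ?_ hsum
      rw [hS]
      simp only
      rw [add_comm, ← Finset.sum_insert (by simp)]
      exact Finset.sum_le_sum_of_subset_of_nonneg (Finset.subset_univ _) (fun j _ _ => hlam0 j)
    let Q : ℝ → Fin m → Fin n → Prop := fun s p i =>
      S i ≤ (p:ℕ) + Int.fract s ∧ (p:ℕ) + Int.fract s < S i + lam i
    let σ : ℝ → Fin m → Option (Fin n) := fun s p =>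
      if h : ∃ i, Q s p i then some h.choose else none
    have hσ : ∀ s p i, σ s p = some i ↔ Q s p i := by
      intro s p i
      have huniq : ∀ i j, Q s p i → Q s p j → i = j := by
        intro i j hi hj
        rcases lt_trichotomy i j with h | h | h
        · linarith [hSlt i j h, hi.2, hj.1]
        · exact h
        · linarith [hSlt j i h, hj.2, hi.1]
      by_cases h : ∃ i, Q s p i
      · simp only [σ, h, dif_pos, Option.some.injEq]
        constructor
        · rintro rfl; exact h.choose_spec
        · exact huniq _ _ h.choose_spec
      · simp only [σ, h, dif_neg, not_false_eq_true, reduceCtorEq, false_iff]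
        exact fun h' => h ⟨i, h'⟩
    have hσper : ∀ s, σ (s+1) = σ s := by
      intro s
      simp only [σ, Q, Int.fract_add_one]
    have hmeasS : ∀ p i, MeasurableSet {s | σ s p = some i} := by
      intro p i
      simp only [hσ, Q]
      have hf : Measurable (fun s : ℝ => ((p:ℕ):ℝ) + Int.fract s) := measurable_const.add measurable_fract
      exact (measurableSet_le measurable_const hf).inter (measurableSet_lt hf measurable_const)
    have hσm : Measurable σ := by
      refine measurable_pi_iff.2 (fun p => ?_)
      refine measurable_to_countable' (fun o => ?_)
      rcases o with _ | i
      · have : (fun s => σ s p) ⁻¹' {none} = (⋃ i, {s | σ s p = some i})ᶜ := by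
          ext s
          simp only [Set.mem_preimage, Set.mem_singleton_iff, Set.mem_compl_iff, Set.mem_iUnion,
            Set.mem_setOf_eq]
          rcases σ s p with _ | j <;> simp
        rw [this]
        exact (MeasurableSet.iUnion (fun i => hmeasS p i)).compl
      · exact hmeasS p i
    refine ⟨σ, hσm, hσper, fun i t => ?_⟩
    rw [aux_per (fun s => γ i (Finset.univ.filter (fun p => σ s p = some i)).card)
        (fun s => by simp only [hσper])
        (fun a b => aux_int _ m (aux_meas σ hσm i) (hcm σ i) (γ i) a b), hCu]
    refine mul_le_mul_of_nonneg_left (le_of_eq ?_) (hTpos i).le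
    have hint : ∀ g : ℕ → ℝ, IntervalIntegrable
        (fun s => g (Finset.univ.filter (fun p => σ s p = some i)).card) volume 0 1 :=
      fun g => aux_int _ m (aux_meas σ hσm i) (hcm σ i) g 0 1
    have hc1 : ∀ s, γ i (Finset.univ.filter (fun p => σ s p = some i)).card =
        γ i (k i) + (γ i (k i + 1) - γ i (k i)) *
            (((Finset.univ.filter (fun p => σ s p = some i)).card : ℝ) - k i) := by
      intro s
      simp only [hσ, Q]
      rcases aux_card m (S i) (S i + lam i) (Int.fract s) (k i) (hS0 i) (hSm i) (Int.fract_nonneg s)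
        (Int.fract_lt_one s) (by linarith [hlam1 i]) (by linarith [hlam2 i]) with h | h
      · rw [h]; ring
      · rw [h]; push_cast; ring
    have hc2 : ∫ s in (0:ℝ)..1, ((Finset.univ.filter (fun p => σ s p = some i)).card : ℝ)
        = lam i := by
      rw [← add_sub_cancel_left (S i) (lam i), ← aux_intcard m (S i) (S i + lam i) (hS0 i)
        (by linarith [hlam0 i]) (hSm i)]
      rw [intervalIntegral.integral_of_le zero_le_one, intervalIntegral.integral_of_le zero_le_one,
        ← integral_Ico_eq_integral_Ioc, ← integral_Ico_eq_integral_Ioc]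
      refine setIntegral_congr_fun measurableSet_Ico (fun s hs => ?_)
      simp only [hσ, Q, Int.fract_eq_self.2 ⟨hs.1, hs.2⟩, add_sub_cancel_left]
    simp_rw [hc1]
    rw [intervalIntegral.integral_add (by simp)
        (hint (fun c => (γ i (k i + 1) - γ i (k i)) * ((c:ℝ) - k i))),
        intervalIntegral.integral_const_mul,
        intervalIntegral.integral_sub (hint (fun c => (c:ℝ))) (by simp), hc2, hlamu i]
    simp
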